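/- arXiv:2205.00186 — 2 statements merged into one kernel-verified Lean document; each statement's English description precedes it below -/
import Mathlib

section
/- Let C be a finite nonempty type of class labels and fix a class c : C. Let α : C → ℝ be the clean class-posterior (α k ≥ 0 for all k and ∑_k α k = 1), let T : C → C → ℝ be a label-noise transition matrix (T k j ≥ 0 for all k, j and ∑_j T k j = 1 for each k), and define the noisy class-posterior α̃ : C → ℝ by α̃ j = ∑_k α k * T k j. Let ρ_c ∈ ℝ with 0 ≤ ρ_c < 1 be a noise bound satisfying T k c ≤ ρ_c for every k ≠ c. If α̃ c > (1 + ρ_c)/2, then α c > 1/2. -/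
/-!
Let `t k` be the probability of observing the noisy label `c` when the true label is `k`. It is at
most `1` for `k = c` and at most `ρ` otherwise, so `α̃ c = ∑ k, α k * t k ≤ ρ + α c * (1 - ρ)`. The
threshold `(1 + ρ) / 2` is the value of the right-hand side at `α c = 1 / 2`.
-/

section WeightedSum

variable {ι R : Type*} [Ring R] [TopologicalSpace R] [IsTopologicalSemiring R]
  {w t : ι → R} {m a ρ : R} {c : ι}

theorem hasSum_mul_le_of_forall_ne_le [PartialOrder R] [IsOrderedRing R] [OrderClosedTopology R]
    (hw : ∀ k, k ≠ c → 0 ≤ w k) (hm : HasSum w m) (ha : HasSum (fun k ↦ w k * t k) a)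
    (ht : ∀ k, k ≠ c → t k ≤ ρ) :
    a ≤ m * ρ + w c * (t c - ρ) := by
  classical
  have hbound : HasSum (fun k ↦ w k * ρ + if k = c then w c * (t c - ρ) else 0)
      (m * ρ + w c * (t c - ρ)) :=
    (hm.mul_right ρ).add (hasSum_ite_eq c _)
  refine hasSum_le (fun k ↦ ?_) ha hbound
  rcases eq_or_ne k c with rfl | hk
  · rw [if_pos rfl, ← mul_add, add_sub_cancel]
  · rw [if_neg hk, add_zero]
    exact mul_le_mul_of_nonneg_left (ht k hk) (hw k hk)

theorem noisy_posterior_threshold_implies_clean_majority_general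
    [LinearOrder R] [IsStrictOrderedRing R] [OrderClosedTopology R] {θ : R}
    (hw : ∀ k, 0 ≤ w k) (hw1 : HasSum w 1) (ha : HasSum (fun k ↦ w k * t k) a)
    (hρ : ρ < 1) (htc : t c ≤ 1) (ht : ∀ k, k ≠ c → t k ≤ ρ)
    (h : ρ + θ * (1 - ρ) < a) :
    θ < w c := by
  have hmass : ρ + θ * (1 - ρ) < ρ + w c * (1 - ρ) :=
    calc
      ρ + θ * (1 - ρ) < a := h
      _ ≤ 1 * ρ + w c * (t c - ρ) := hasSum_mul_le_of_forall_ne_le (fun k _ ↦ hw k) hw1 ha ht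
      _ = ρ + w c * (t c - ρ) := by rw [one_mul]
      _ ≤ ρ + w c * (1 - ρ) := by gcongr; exact hw c
  exact lt_of_mul_lt_mul_right (lt_of_add_lt_add_left hmass) (sub_nonneg.mpr hρ.le)

end WeightedSum

theorem noisy_posterior_threshold_implies_clean_majority
    {C : Type*} [Fintype C] [Nonempty C] (c : C)
    (α : C → ℝ) (hα0 : ∀ k, 0 ≤ α k) (hα1 : ∑ k, α k = 1)
    (T : C → C → ℝ) (hT0 : ∀ k j, 0 ≤ T k j) (hT1 : ∀ k, ∑ j, T k j = 1)
    (αt : C → ℝ) (hαt : ∀ j, αt j = ∑ k, α k * T k j)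
    (ρc : ℝ) (hρ0 : 0 ≤ ρc) (hρ1 : ρc < 1)
    (hTρ : ∀ k, k ≠ c → T k c ≤ ρc)
    (h : αt c > (1 + ρc) / 2) :
    α c > 1 / 2 := by
  have hTc : T c c ≤ 1 :=
    hT1 c ▸ Finset.single_le_sum (fun j _ ↦ hT0 c j) (Finset.mem_univ c)
  have hsum : HasSum (fun k ↦ α k * T k c) (αt c) := hαt c ▸ hasSum_fintype _
  have hthreshold : ρc + 1 / 2 * (1 - ρc) < αt c := by linarith
  exact noisy_posterior_threshold_implies_clean_majority_general hα0 (hα1 ▸ hasSum_fintype α)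
    hsum hρ1 hTc hTρ hthreshold
end

section
/- Let C be a finite type of class labels with at least two elements and fix a class c : C. Let α : C → ℝ satisfy α k ≥ 0 for all k and ∑_k α k = 1, let T : C → C → ℝ satisfy T k j ≥ 0 for all k, j and ∑_j T k j = 1 for each k, and define α̃ : C → ℝ by α̃ j = ∑_k α k * T k j. Let ρ_c ∈ ℝ with 0 ≤ ρ_c < 1 satisfy T k c ≤ ρ_c for every k ≠ c. If α̃ c > (1 + ρ_c)/2, then α k < α c for every k ≠ c; that is, c is the unique class maximizing the clean posterior α. -/
/-!
Labels other than `c` turn into `c` with probability at most `ρ`, so the noisy posterior of `c` is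
at most the mixture `α c + (1 - α c) * ρ`. As `ρ < 1`, this bound increases with `α c`, and it
equals `(1 + ρ) / 2` at `α c = 1 / 2`. Exceeding the threshold therefore forces `α c > 1 / 2`, which
leaves less than half of the mass to all other classes together.
-/

theorem hasSum_mul_le_of_le_of_forall_ne_le {ι R : Type*} [Ring R] [PartialOrder R]
    [IsOrderedRing R] [TopologicalSpace R] [IsTopologicalRing R] [OrderClosedTopology R]
    {w t : ι → R} {s a M ρ : R} {c : ι} (hw : ∀ k, 0 ≤ w k) (hs : HasSum w s)
    (ha : HasSum (fun k => w k * t k) a) (hc : t c ≤ M) (hne : ∀ k, k ≠ c → t k ≤ ρ) :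
    a ≤ w c * M + (s - w c) * ρ := by
  classical
  have hbound : HasSum (Function.update (fun k => w k * ρ) c (w c * M))
      (w c * M + (s - w c) * ρ) := by
    have hvalue : w c * M - w c * ρ + s * ρ = w c * M + (s - w c) * ρ := by noncomm_ring
    exact hvalue ▸ (hs.mul_right ρ).update c (w c * M)
  refine hasSum_le (fun k => ?_) ha hbound
  obtain rfl | hk := eq_or_ne k c
  · simpa using mul_le_mul_of_nonneg_left hc (hw k)
  · simpa [hk] using mul_le_mul_of_nonneg_left (hne k hk) (hw k)

theorem add_le_hasSum {ι M : Type*} [AddCommMonoid M] [PartialOrder M] [IsOrderedAddMonoid M]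
    [TopologicalSpace M] [OrderClosedTopology M] {w : ι → M} {s : M} {i j : ι}
    (hw : ∀ k, 0 ≤ w k) (hs : HasSum w s) (hij : i ≠ j) : w i + w j ≤ s := by
  classical
  simpa only [Finset.sum_pair hij] using sum_le_hasSum {i, j} (fun k _ => hw k) hs

section OrderedField

variable {K : Type*} [Field K] [LinearOrder K] [IsStrictOrderedRing K]

theorem half_lt_of_midpoint_lt_mixture {p ρ : K} (hρ : ρ < 1)
    (h : (1 + ρ) / 2 < p + (1 - p) * ρ) : 1 / 2 < p := by
  have hmul : (1 / 2) * (1 - ρ) < p * (1 - ρ) := by linarith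
  exact lt_of_mul_lt_mul_right hmul (sub_nonneg.2 hρ.le)

variable [TopologicalSpace K] [OrderClosedTopology K] {ι : Type*}

theorem lt_of_half_hasSum_lt {w : ι → K} {s : K} {c k : ι} (hw : ∀ k, 0 ≤ w k)
    (hs : HasSum w s) (hc : s / 2 < w c) (hk : k ≠ c) : w k < w c := by
  have hpair : w k + w c ≤ s := add_le_hasSum hw hs hk
  linarith

theorem noisy_posterior_threshold_implies_unique_argmax_general [IsTopologicalRing K]
    {c : ι} {α t : ι → K} {a ρ : K} (hα0 : ∀ k, 0 ≤ α k) (hα1 : HasSum α 1)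
    (ha : HasSum (fun k => α k * t k) a) (hρ : ρ < 1) (hc : t c ≤ 1)
    (hne : ∀ k, k ≠ c → t k ≤ ρ) (h : (1 + ρ) / 2 < a) :
    ∀ k, k ≠ c → α k < α c := by
  have hmixture : a ≤ α c + (1 - α c) * ρ := by
    simpa only [mul_one] using hasSum_mul_le_of_le_of_forall_ne_le hα0 hα1 ha hc hne
  have hhalf : 1 / 2 < α c := half_lt_of_midpoint_lt_mixture hρ (h.trans_le hmixture)
  exact fun k hk => lt_of_half_hasSum_lt hα0 hα1 hhalf hk

end OrderedField

theorem noisy_posterior_threshold_implies_unique_argmax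
    {C : Type*} [Fintype C] [Nontrivial C] (c : C)
    (α : C → ℝ) (hα0 : ∀ k, 0 ≤ α k) (hα1 : ∑ k, α k = 1)
    (T : C → C → ℝ) (hT0 : ∀ k j, 0 ≤ T k j) (hT1 : ∀ k, ∑ j, T k j = 1)
    (αt : C → ℝ) (hαt : ∀ j, αt j = ∑ k, α k * T k j)
    (ρc : ℝ) (hρ0 : 0 ≤ ρc) (hρ1 : ρc < 1)
    (hTρ : ∀ k, k ≠ c → T k c ≤ ρc)
    (h : αt c > (1 + ρc) / 2) :
    ∀ k, k ≠ c → α k < α c := by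
  have hTc : T c c ≤ 1 :=
    (Finset.single_le_sum (fun j _ => hT0 c j) (Finset.mem_univ c)).trans_eq (hT1 c)
  have hsum : HasSum (fun k => α k * T k c) (αt c) := hαt c ▸ hasSum_fintype _
  exact noisy_posterior_threshold_implies_unique_argmax_general hα0 (hα1 ▸ hasSum_fintype α)
    hsum hρ1 hTc hTρ h
end
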